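/- arXiv:2501.10112 — 2 statements merged into one kernel-verified Lean document; each statement's English description precedes it below -/
import Mathlib

section
/- For every n ≥ 1, the complement of the path graph P_{2n} on 2n vertices can be represented by a 2-uniform word, i.e., there is a word over its vertex set in which every vertex occurs exactly twice that represents the graph. -/
/-- Two distinct letters `x` and `y` alternate in the word `w` if, after deleting all
letters other than `x` and `y`, no two consecutive letters of the remaining word are equal. -/
def Alternate {V : Type*} [DecidableEq V] (w : List V) (x y : V) : Prop :=
  (w.filter fun z => decide (z = x ∨ z = y)).Chain' (· ≠ ·)

/-- A word `w` represents the simple graph `G` if every vertex occurs in `w` at least once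
and two distinct vertices alternate in `w` exactly when they are adjacent in `G`. -/
def Represents {V : Type*} [DecidableEq V] (G : SimpleGraph V) (w : List V) : Prop :=
  (∀ v : V, v ∈ w) ∧ ∀ x y : V, x ≠ y → (Alternate w x y ↔ G.Adj x y)

/-- The path graph on `n` vertices: `i` and `j` are adjacent iff `|i - j| = 1`. -/
def pathGraph (n : ℕ) : SimpleGraph (Fin n) :=
  SimpleGraph.fromRel fun i j => (i : ℕ) + 1 = (j : ℕ)

/-- A list containing each element exactly once, in order of an injective key. -/
theorem exists_sorted_list {m : ℕ} (f : Fin m → ℕ) (hf : Function.Injective f) :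
    ∃ l : List (Fin m), (∀ v, l.count v = 1) ∧
      ∀ x y, f x < f y → l.filter (fun z => decide (z = x ∨ z = y)) = [x, y] := by
  have hp := List.mergeSort_perm (List.finRange m) (fun a b => decide (f a ≤ f b))
  have hs := List.pairwise_mergeSort (le := fun a b => decide (f a ≤ f b))
    (by intro a b c; simpa using fun h1 h2 => le_trans h1 h2)
    (by intro a b; simpa using le_total (f a) (f b)) (List.finRange m)
  generalize (List.finRange m).mergeSort (fun a b => decide (f a ≤ f b)) = l at hp hs
  have hnd : l.Nodup := hp.nodup_iff.mpr (List.nodup_finRange m)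
  have hmem : ∀ v, v ∈ l := fun v => hp.mem_iff.mpr (List.mem_finRange v)
  refine ⟨l, fun v => List.count_eq_one_of_mem hnd (hmem v), fun x y hxy => ?_⟩
  have hne : x ≠ y := by rintro rfl; exact lt_irrefl _ hxy
  have hperm : (l.filter (fun z => decide (z = x ∨ z = y))).Perm [x, y] := by
    rw [List.perm_ext_iff_of_nodup (hnd.filter _) (by simp [hne])]
    intro a; simp [hmem]
  refine hperm.eq_of_pairwise (le := fun a b => f a ≤ f b) ?_ ?_ ?_
  · intro a b _ _ h1 h2; exact hf (le_antisymm h1 h2)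
  · exact (hs.imp (by simp)).filter _
  · simp [hxy.le]

/-- The complement of the path graph `P_{2n}` on `2n` vertices can be represented by a
2-uniform word: a word in which every vertex occurs exactly twice. -/
theorem complement_pathGraph_even_two_uniform :
    ∀ n : ℕ, 1 ≤ n → ∃ w : List (Fin (2 * n)),
      Represents (pathGraph (2 * n))ᶜ w ∧ ∀ v : Fin (2 * n), w.count v = 2 := by
  intro n _
  obtain ⟨l, hl, hl2⟩ := exists_sorted_list (m := 2 * n)
    (fun i => if i.val % 2 = 0 then 2 * i.val else 2 * i.val + 3)
    (by intro a b h; ext; simp only at h; split_ifs at h <;> omega)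
  obtain ⟨k, hk, hk2⟩ := exists_sorted_list (m := 2 * n)
    (fun i => if i.val % 2 = 0 then 2 * i.val + 3 else 2 * i.val)
    (by intro a b h; ext; simp only at h; split_ifs at h <;> omega)
  have hc : ∀ v, (l ++ k).count v = 2 := by intro v; simp [hl, hk]
  refine ⟨l ++ k, ⟨fun v => List.count_pos_iff.mp (by rw [hc]; norm_num), ?_⟩, hc⟩
  intro x y hxy
  have hv : x.val ≠ y.val := fun h => hxy (Fin.ext h)
  have hadj : (pathGraph (2 * n))ᶜ.Adj x y ↔ ¬ (x.val + 1 = y.val ∨ y.val + 1 = x.val) := by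
    simp [pathGraph, SimpleGraph.compl_adj, hxy]
  have hcomm : ∀ t : List (Fin (2 * n)), t.filter (fun z => decide (z = x ∨ z = y))
      = t.filter (fun z => decide (z = y ∨ z = x)) := by
    intro t; simp only [or_comm]
  rw [hadj, Alternate, List.filter_append]
  have hl3 := hl2 x y
  have hl4 := hl2 y x
  have hk3 := hk2 x y
  have hk4 := hk2 y x
  rw [← hcomm] at hl4 hk4
  have A : ∀ a b : Fin (2 * n), a ≠ b → ([a, b] ++ [a, b]).Chain' (· ≠ ·) := by
    intro a b h; simp [List.Chain', h, h.symm]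
  have B : ∀ a b : Fin (2 * n), ¬ ([a, b] ++ [b, a]).Chain' (· ≠ ·) := by
    intro a b h; simp [List.Chain'] at h
  rcases lt_or_gt_of_ne (show (if x.val % 2 = 0 then 2 * x.val else 2 * x.val + 3) ≠
      (if y.val % 2 = 0 then 2 * y.val else 2 * y.val + 3) by split_ifs <;> omega) with h1 | h1 <;>
  rcases lt_or_gt_of_ne (show (if x.val % 2 = 0 then 2 * x.val + 3 else 2 * x.val) ≠
      (if y.val % 2 = 0 then 2 * y.val + 3 else 2 * y.val) by split_ifs <;> omega) with h2 | h2
  · rw [hl3 h1, hk3 h2]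
    exact iff_of_true (A _ _ hxy) (by split_ifs at h1 h2 <;> omega)
  · rw [hl3 h1, hk4 h2]
    exact iff_of_false (B _ _) (by split_ifs at h1 h2 <;> omega)
  · rw [hl4 h1, hk3 h2]
    exact iff_of_false (B _ _) (by split_ifs at h1 h2 <;> omega)
  · rw [hl4 h1, hk4 h2]
    exact iff_of_true (A _ _ hxy.symm) (by split_ifs at h1 h2 <;> omega)
end

section
/- For every n ≥ 2, the complement of the even cycle graph C_{2n} on 2n vertices is word-representable. -/
/-- A simple graph is word-representable if some word represents it. -/
def WordRepresentable {V : Type*} [DecidableEq V] (G : SimpleGraph V) : Prop :=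
  ∃ w : List V, Represents G w

/-- The cycle graph on `m` vertices `{0, …, m-1}`: `i` and `j` are adjacent iff
`i - j ≡ ±1 (mod m)`. -/
def cycleGraph (m : ℕ) : SimpleGraph (Fin m) :=
  SimpleGraph.fromRel fun i j => ((i : ℕ) + 1) % m = (j : ℕ)

/-- Restricting the increasing list of `Fin m` to two elements. -/
lemma filter_finRange_pair {m : ℕ} (u v : Fin m) (h : u < v) :
    ((List.finRange m).filter fun z => decide (z = u ∨ z = v)) = [u, v] := by
  refine List.Perm.eq_of_pairwise (le := (· < ·)) ?_ ?_ ?_ ?_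
  · intro a b _ _ h1 h2
    exact absurd h1 (lt_asymm h2)
  · exact (List.pairwise_lt_finRange m).filter _
  · simp [h]
  · rw [List.perm_ext_iff_of_nodup ((List.nodup_finRange m).filter _) (by simp [h.ne])]
    intro a
    simp

/-- Restricting a permutation, written as a list, to two elements. -/
lemma filter_map_pair {m : ℕ} (f : Fin m → Fin m) (hf : ∀ z, f (f z) = z) (x y : Fin m)
    (h : x ≠ y) :
    (((List.finRange m).map f).filter fun z => decide (z = x ∨ z = y)) =
      if f x < f y then [x, y] else [y, x] := by
  have key : ∀ z w, f z = w ↔ z = f w := fun z w =>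
    ⟨fun e => by rw [← e, hf], fun e => by rw [e, hf]⟩
  rw [List.filter_map]
  have : ((fun z => decide (z = x ∨ z = y)) ∘ f) = fun z => decide (z = f x ∨ z = f y) := by
    funext z
    simp [key]
  rw [this]
  split_ifs with hlt
  · rw [filter_finRange_pair _ _ hlt]
    simp [hf]
  · have hne : f x ≠ f y := fun e => h (by rw [← hf x, e, hf])
    have hlt' : f y < f x := lt_of_le_of_ne (not_lt.mp hlt) hne.symm
    have : (fun z => decide (z = f x ∨ z = f y)) = fun z => decide (z = f y ∨ z = f x) := by
      funext z
      simp [or_comm]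
    rw [this, filter_finRange_pair _ _ hlt']
    simp [hf]

/-- Swaps `2i` and `2i+1`. -/
def swapA (n : ℕ) (z : Fin (2 * n)) : Fin (2 * n) :=
  ⟨if z.val % 2 = 0 then z.val + 1 else z.val - 1, by have := z.2; split_ifs <;> omega⟩

/-- Swaps `2i+1` and `2i+2`, fixing the first and the last element. -/
def swapB (n : ℕ) (z : Fin (2 * n)) : Fin (2 * n) :=
  ⟨if z.val = 0 ∨ z.val + 1 = 2 * n then z.val
    else if z.val % 2 = 1 then z.val + 1 else z.val - 1, by
      have := z.2; split_ifs <;> omega⟩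

lemma swapA_swapA (n : ℕ) (z : Fin (2 * n)) : swapA n (swapA n z) = z := by
  have := z.2
  apply Fin.ext
  simp only [swapA]
  split_ifs <;> omega

lemma swapB_swapB (n : ℕ) (z : Fin (2 * n)) : swapB n (swapB n z) = z := by
  have := z.2
  apply Fin.ext
  by_cases h : z.val = 0 ∨ z.val + 1 = 2 * n
  · simp [swapB, h]
  · rcases Nat.mod_two_eq_zero_or_one z.val with hp | hp
    · have hq1 : ¬ (z.val - 1 = 0 ∨ z.val - 1 + 1 = 2 * n) := by omega
      have hq2 : (z.val - 1) % 2 = 1 := by omega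
      simp only [swapB, h, hp, hq1, hq2, if_false, if_true, zero_ne_one]
      omega
    · have hq1 : ¬ (z.val + 1 = 0 ∨ z.val + 1 + 1 = 2 * n) := by omega
      have hq2 : ¬ (z.val + 1) % 2 = 1 := by omega
      simp only [swapB, h, hp, hq1, hq2, if_false, if_true]
      omega

/-- The representing word. -/
def theWord (n : ℕ) (a b : Fin (2 * n)) : List (Fin (2 * n)) :=
  (List.finRange (2 * n)).map (swapA n) ++
    ((List.finRange (2 * n)).filter (fun z => decide (z ≠ b)) ++
      ([a, b] ++ ((List.finRange (2 * n)).map (swapB n)).filter (fun z => decide (z ≠ a))))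

lemma alternate_symm {V : Type*} [DecidableEq V] (w : List V) (x y : V) :
    Alternate w x y ↔ Alternate w y x := by
  unfold Alternate
  have : (fun z => decide (z = x ∨ z = y)) = fun z => decide (z = y ∨ z = x) := by
    funext z
    simp [or_comm]
  rw [this]

lemma theWord_alternate (n : ℕ) (hn : 2 ≤ n) (a b : Fin (2 * n)) (ha : a.val = 0)
    (hb : b.val + 1 = 2 * n) (x y : Fin (2 * n)) (hxy : x < y) :
    Alternate (theWord n a b) x y ↔ (cycleGraph (2 * n))ᶜ.Adj x y := by
  have hx := x.2
  have hy := y.2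
  have hlt : x.val < y.val := hxy
  have hne : x ≠ y := hxy.ne
  have hadj : (cycleGraph (2 * n))ᶜ.Adj x y ↔
      ¬ (x.val + 1 = y.val ∨ (x = a ∧ y = b)) := by
    simp only [cycleGraph, SimpleGraph.compl_adj, SimpleGraph.fromRel_adj, Fin.ext_iff, ha]
    have h1 : (x.val + 1) % (2 * n) = x.val + 1 := Nat.mod_eq_of_lt (by omega)
    rw [h1]
    by_cases hyb : y.val + 1 = 2 * n
    · rw [hyb, Nat.mod_self]
      omega
    · rw [Nat.mod_eq_of_lt (by omega : y.val + 1 < 2 * n)]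
      omega
  have hA : swapA n x < swapA n y ↔ ¬ (x.val % 2 = 0 ∧ x.val + 1 = y.val) := by
    simp only [swapA, Fin.lt_def]
    split_ifs <;> omega
  have hB : swapB n x < swapB n y ↔ ¬ (x.val % 2 = 1 ∧ x.val + 1 = y.val) := by
    simp only [swapB, Fin.lt_def]
    split_ifs <;> omega
  have hxb : x ≠ b := by rw [Ne, Fin.ext_iff]; omega
  have hya : y ≠ a := by rw [Ne, Fin.ext_iff]; omega
  have hab : x.val + 1 = y.val → ¬ (x = a ∧ y = b) := by
    rw [Fin.ext_iff, Fin.ext_iff]; omega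
  rw [hadj]
  unfold Alternate theWord
  simp only [List.filter_append]
  rw [filter_map_pair _ (swapA_swapA n) x y hne, List.filter_comm, filter_finRange_pair x y hxy,
    List.filter_comm, filter_map_pair _ (swapB_swapB n) x y hne, if_congr hA rfl rfl,
    if_congr hB rfl rfl]
  have hba : b ≠ a := by rw [Ne, Fin.ext_iff]; omega
  clear hadj hA hB
  have hs := hne.symm
  have hxb' := hxb.symm
  have hya' := hya.symm
  have hba' := hba.symm
  unfold List.Chain'
  by_cases h2 : x = a
  · subst h2
    by_cases h3 : y = b
    · subst h3
      have h1 : ¬ x.val + 1 = y.val := fun h => hab h ⟨rfl, rfl⟩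
      simp [h1, hne, hs]
    · have h3' := Ne.symm h3
      have hp : x.val % 2 = 0 := by omega
      by_cases h1 : x.val + 1 = y.val <;>
      simp [hp, h1, hne, hs, h3, h3', hxb, hxb']
  · have h2' := Ne.symm h2
    by_cases h3 : y = b
    · subst h3
      rcases Nat.mod_two_eq_zero_or_one x.val with hp | hp <;>
      by_cases h1 : x.val + 1 = y.val <;>
      simp [hp, h1, hne, hs, h2, h2', hya, hya']
    · have h3' := Ne.symm h3
      rcases Nat.mod_two_eq_zero_or_one x.val with hp | hp <;>
      by_cases h1 : x.val + 1 = y.val <;>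
      simp [hp, h1, hne, hs, h2, h2', h3, h3', hxb, hxb', hya, hya']

theorem complement_cycleGraph_even_wordRepresentable :
    ∀ n : ℕ, 2 ≤ n → WordRepresentable (cycleGraph (2 * n))ᶜ := by
  intro n hn
  refine ⟨theWord n ⟨0, by omega⟩ ⟨2 * n - 1, by omega⟩, ?_, ?_⟩
  · intro v
    unfold theWord
    apply List.mem_append_left
    rw [List.mem_map]
    exact ⟨swapA n v, List.mem_finRange _, swapA_swapA n v⟩
  · intro x y hne
    rcases lt_or_gt_of_ne hne with h | h
    · exact theWord_alternate n hn _ _ rfl (by simp only; omega) x y h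
    · rw [alternate_symm, SimpleGraph.adj_comm]
      exact theWord_alternate n hn _ _ rfl (by simp only; omega) y x h
end
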